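/- Let c_{βε}^γ (β, ε, γ ∈ {1,…,r}) be real constants, let α_1, …, α_r be smooth vector fields on ℝ^n with [α_β, α_ε] = Σ_{γ=1}^r c_{βε}^γ α_γ for all β, ε, and let Υ^β_i : ℝ^m → ℝ (β ∈ {1,…,r}, i ∈ {1,…,m}) be smooth functions satisfying the Maurer–Cartan-type condition ∂Υ^γ_j/∂q^i − ∂Υ^γ_i/∂q^j + Σ_{β,ε=1}^r c_{βε}^γ Υ^β_i Υ^ε_j = 0 on ℝ^m for all i, j, γ. Define vector fields Z_1, …, Z_m on ℝ^m × ℝ^n by Z_i(q, y) := (e_i, Σ_{β=1}^r Υ^β_i(q)·α_β(y)), where e_i is the i-th standard basis vector of ℝ^m. Then [Z_i, Z_j] = 0 on ℝ^m × ℝ^n for all i, j ∈ {1,…,m}. (This is the integrability of the system of PDEs associated with a g-structure, making it a PDE Lie system.) -/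

import Mathlib

/-- Lie bracket of vector fields: `[X, Y](p) = DY(p)(X(p)) − DX(p)(Y(p))`. -/
noncomputable def lieBr {E : Type*} [NormedAddCommGroup E] [NormedSpace ℝ E]
    (X Y : E → E) : E → E :=
  fun x => fderiv ℝ Y x (X x) - fderiv ℝ X x (Y x)

/-!
Freeze one variable at a time: the vertical part of `[(u, V), (v, W)]`, with `u`, `v` constant, is a
base derivative of the coefficients plus the bracket of the two fields restricted to the fibre. For
`V = ∑ β, f β q • α β y` and `W = ∑ β, g β q • α β y` the restrictions are combinations of the
`α β` with constant coefficients, so the structure constants turn `[(u, V), (v, W)]` into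
`∑ γ, F γ • α γ`, where `F` is the curvature whose vanishing is the Maurer–Cartan condition.
-/

section LieBracket

open VectorField

variable {𝕜 E F κ : Type*} [NontriviallyNormedField 𝕜]
  [NormedAddCommGroup E] [NormedSpace 𝕜 E] [NormedAddCommGroup F] [NormedSpace 𝕜 F]

theorem fderiv_apply_prodMk_eq_add_partial {G : Type*} [NormedAddCommGroup G] [NormedSpace 𝕜 G]
    {V : E × F → G} {q : E} {y : F}
    (hV : DifferentiableAt 𝕜 V (q, y)) (u : E) (w : F) :
    fderiv 𝕜 V (q, y) (u, w) =
      fderiv 𝕜 (fun q' ↦ V (q', y)) q u + fderiv 𝕜 (fun y' ↦ V (q, y')) y w := by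
  have base_partial : HasFDerivAt (fun q' ↦ V (q', y)) (fderiv 𝕜 V (q, y) ∘L .inl 𝕜 E F) q :=
    hV.hasFDerivAt.comp q (hasFDerivAt_prodMk_left q y)
  have fibre_partial : HasFDerivAt (fun y' ↦ V (q, y')) (fderiv 𝕜 V (q, y) ∘L .inr 𝕜 E F) y :=
    hV.hasFDerivAt.comp y (hasFDerivAt_prodMk_right q y)
  rw [base_partial.fderiv, fibre_partial.fderiv]
  simp [← map_add]

theorem lieBracket_const_prodMk {V W : E × F → F} {q : E} {y : F}
    (hV : DifferentiableAt 𝕜 V (q, y)) (hW : DifferentiableAt 𝕜 W (q, y)) (u v : E) :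
    lieBracket 𝕜 (fun p ↦ (u, V p)) (fun p ↦ (v, W p)) (q, y) =
      (0, fderiv 𝕜 (fun q' ↦ W (q', y)) q u - fderiv 𝕜 (fun q' ↦ V (q', y)) q v +
        lieBracket 𝕜 (fun y' ↦ V (q, y')) (fun y' ↦ W (q, y')) y) := by
  rw [lieBracket, (differentiableAt_const v).fderiv_prodMk hW,
    (differentiableAt_const u).fderiv_prodMk hV]
  ext
  · simp
  · simp only [ContinuousLinearMap.prod_apply, Prod.snd_sub, lieBracket,
      fderiv_apply_prodMk_eq_add_partial hV, fderiv_apply_prodMk_eq_add_partial hW]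
    abel

variable [Fintype κ]

theorem fderiv_sum_smul_const_apply {f : κ → E → 𝕜} {q : E}
    (hf : ∀ β, DifferentiableAt 𝕜 (f β) q) (w : κ → F) (u : E) :
    fderiv 𝕜 (fun q' ↦ ∑ β, f β q' • w β) q u = ∑ β, fderiv 𝕜 (f β) q u • w β := by
  rw [fderiv_fun_sum fun β _ ↦ (hf β).smul_const (w β), sum_apply]
  exact Finset.sum_congr rfl fun β _ ↦ by
    rw [fderiv_smul_const (hf β), ContinuousLinearMap.smulRight_apply]

theorem fderiv_sum_const_smul_apply {X : κ → E → F} {y : E}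
    (hX : ∀ β, DifferentiableAt 𝕜 (X β) y) (a : κ → 𝕜) (w : E) :
    fderiv 𝕜 (fun y' ↦ ∑ β, a β • X β y') y w = ∑ β, a β • fderiv 𝕜 (X β) y w := by
  rw [fderiv_fun_sum fun β _ ↦ (hX β).fun_const_smul (a β), sum_apply]
  exact Finset.sum_congr rfl fun β _ ↦ by
    rw [fderiv_fun_const_smul (hX β), smul_apply]

theorem lieBracket_sum_const_smul {ι : Type*} [Fintype ι] {X : ι → F → F} {Y : κ → F → F} {y : F}
    (hX : ∀ β, DifferentiableAt 𝕜 (X β) y) (hY : ∀ ε, DifferentiableAt 𝕜 (Y ε) y)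
    (a : ι → 𝕜) (b : κ → 𝕜) :
    lieBracket 𝕜 (fun y' ↦ ∑ β, a β • X β y') (fun y' ↦ ∑ ε, b ε • Y ε y') y =
      ∑ β, ∑ ε, (a β * b ε) • lieBracket 𝕜 (X β) (Y ε) y := by
  simp only [lieBracket, fderiv_sum_const_smul_apply hX, fderiv_sum_const_smul_apply hY,
    map_sum, map_smul, Finset.smul_sum, smul_smul, smul_sub, Finset.sum_sub_distrib]
  rw [Finset.sum_comm]
  simp only [mul_comm]

theorem lieBracket_sum_const_smul_of_structure_constants {c : κ → κ → κ → 𝕜} {α : κ → F → F}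
    {y : F} (hα : ∀ β, DifferentiableAt 𝕜 (α β) y)
    (hbr : ∀ β ε, lieBracket 𝕜 (α β) (α ε) y = ∑ γ, c β ε γ • α γ y) (a b : κ → 𝕜) :
    lieBracket 𝕜 (fun y' ↦ ∑ β, a β • α β y') (fun y' ↦ ∑ ε, b ε • α ε y') y =
      ∑ γ, (∑ β, ∑ ε, c β ε γ * (a β * b ε)) • α γ y := by
  calc lieBracket 𝕜 (fun y' ↦ ∑ β, a β • α β y') (fun y' ↦ ∑ ε, b ε • α ε y') y
      = ∑ β, ∑ ε, ∑ γ, (c β ε γ * (a β * b ε)) • α γ y := by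
        simp only [lieBracket_sum_const_smul hα hα, hbr, Finset.smul_sum, smul_smul, mul_comm]
    _ = ∑ β, ∑ γ, ∑ ε, (c β ε γ * (a β * b ε)) • α γ y :=
        Finset.sum_congr rfl fun β _ ↦ Finset.sum_comm
    _ = ∑ γ, (∑ β, ∑ ε, c β ε γ * (a β * b ε)) • α γ y := by
        rw [Finset.sum_comm]
        simp only [Finset.sum_smul]

/-- The horizontal lift to `E × F` of the constant vector field `u` on `E`, for the connection whose
form, evaluated at `u`, has components `f β` along the vertical fields `α β`. -/
def horizontalLift (u : E) (f : κ → E → 𝕜) (α : κ → F → F) : E × F → E × F :=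
  fun p ↦ (u, ∑ β, f β p.1 • α β p.2)

/-- The `γ`-component of the curvature `D_u A(v) - D_v A(u) + [A(u), A(v)]` of a connection form `A`
with values in the Lie algebra with structure constants `c`. Only the components `f` of `A(u)` and
`g` of `A(v)` are recorded. -/
noncomputable def curvatureCoeff (c : κ → κ → κ → 𝕜) (u v : E) (f g : κ → E → 𝕜) (γ : κ) (q : E) :
    𝕜 :=
  fderiv 𝕜 (g γ) q u - fderiv 𝕜 (f γ) q v + ∑ β, ∑ ε, c β ε γ * (f β q * g ε q)

variable {c : κ → κ → κ → 𝕜} {α : κ → F → F} {f g : κ → E → 𝕜} {q : E} {y : F}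

theorem differentiableAt_sum_smul_prod (hf : ∀ β, DifferentiableAt 𝕜 (f β) q)
    (hα : ∀ β, DifferentiableAt 𝕜 (α β) y) :
    DifferentiableAt 𝕜 (fun p : E × F ↦ ∑ β, f β p.1 • α β p.2) (q, y) :=
  .fun_sum fun β _ ↦ ((hf β).comp (q, y) differentiableAt_fst).smul
    ((hα β).comp (q, y) differentiableAt_snd)

theorem lieBracket_horizontalLift (hα : ∀ β, DifferentiableAt 𝕜 (α β) y)
    (hbr : ∀ β ε, lieBracket 𝕜 (α β) (α ε) y = ∑ γ, c β ε γ • α γ y)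
    (hf : ∀ β, DifferentiableAt 𝕜 (f β) q) (hg : ∀ β, DifferentiableAt 𝕜 (g β) q) (u v : E) :
    lieBracket 𝕜 (horizontalLift u f α) (horizontalLift v g α) (q, y) =
      (0, ∑ γ, curvatureCoeff c u v f g γ q • α γ y) := by
  have hV := differentiableAt_sum_smul_prod hf hα
  have hW := differentiableAt_sum_smul_prod hg hα
  unfold horizontalLift
  rw [lieBracket_const_prodMk hV hW]
  simp only [fderiv_sum_smul_const_apply hf, fderiv_sum_smul_const_apply hg,
    lieBracket_sum_const_smul_of_structure_constants hα hbr, curvatureCoeff, add_smul, sub_smul,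
    Finset.sum_add_distrib, Finset.sum_sub_distrib]

theorem stmt_14_general (hα : ∀ β, DifferentiableAt 𝕜 (α β) y)
    (hbr : ∀ β ε, lieBracket 𝕜 (α β) (α ε) y = ∑ γ, c β ε γ • α γ y)
    (hf : ∀ β, DifferentiableAt 𝕜 (f β) q) (hg : ∀ β, DifferentiableAt 𝕜 (g β) q) {u v : E}
    (hMC : ∀ γ, curvatureCoeff c u v f g γ q = 0) :
    lieBracket 𝕜 (horizontalLift u f α) (horizontalLift v g α) (q, y) = 0 := by
  simp only [lieBracket_horizontalLift hα hbr hf hg, hMC, zero_smul, Finset.sum_const_zero,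
    Prod.mk_zero_zero]

end LieBracket

/-- **Integrability of the PDE system associated with a g-structure.** Let
`αv_1, …, αv_r` be smooth vector fields on `ℝ^n` with
`[αv_β, αv_ε] = Σ_γ c_{βε}^γ αv_γ`, and let `Υ^β_i : ℝ^m → ℝ` be smooth functions
satisfying the Maurer–Cartan-type condition
`∂Υ^γ_j/∂q^i − ∂Υ^γ_i/∂q^j + Σ_{β,ε} c_{βε}^γ Υ^β_i Υ^ε_j = 0`. Then the vector
fields `Z_i(q, y) = (e_i, Σ_β Υ^β_i(q)·αv_β(y))` on `ℝ^m × ℝ^n` pairwise commute: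
`[Z_i, Z_j] = 0`. -/
theorem stmt_14 (m n r : ℕ)
    (c : Fin r → Fin r → Fin r → ℝ)
    (αv : Fin r → (Fin n → ℝ) → (Fin n → ℝ))
    (hαs : ∀ β, ContDiff ℝ (⊤ : ℕ∞) (αv β))
    (hbr : ∀ β ε : Fin r, ∀ y : Fin n → ℝ,
      lieBr (αv β) (αv ε) y = ∑ γ, c β ε γ • αv γ y)
    (Υ : Fin r → Fin m → (Fin m → ℝ) → ℝ)
    (hΥs : ∀ β i, ContDiff ℝ (⊤ : ℕ∞) (Υ β i))
    (hMC : ∀ γ : Fin r, ∀ i j : Fin m, ∀ q : Fin m → ℝ,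
      fderiv ℝ (Υ γ j) q (Pi.single i 1) - fderiv ℝ (Υ γ i) q (Pi.single j 1) +
        ∑ β, ∑ ε, c β ε γ * (Υ β i q * Υ ε j q) = 0)
    (Z : Fin m → ((Fin m → ℝ) × (Fin n → ℝ)) → ((Fin m → ℝ) × (Fin n → ℝ)))
    (hZ : ∀ (i : Fin m) (q : Fin m → ℝ) (y : Fin n → ℝ),
      Z i (q, y) = (Pi.single i (1 : ℝ), ∑ β, Υ β i q • αv β y)) :
    ∀ i j : Fin m, ∀ p : (Fin m → ℝ) × (Fin n → ℝ),
      lieBr (Z i) (Z j) p = 0 := by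
  rintro i j ⟨q, y⟩
  have hZ_lift (k : Fin m) : Z k = horizontalLift (Pi.single k 1) (fun β ↦ Υ β k) αv :=
    funext fun p ↦ hZ k p.1 p.2
  have hα (β : Fin r) : DifferentiableAt ℝ (αv β) y := (hαs β).differentiable (by simp) y
  have hΥ (k : Fin m) (β : Fin r) : DifferentiableAt ℝ (Υ β k) q :=
    (hΥs β k).differentiable (by simp) q
  change VectorField.lieBracket ℝ (Z i) (Z j) (q, y) = 0
  rw [hZ_lift, hZ_lift]
  exact stmt_14_general hα (fun β ε ↦ hbr β ε y) (hΥ i) (hΥ j) (fun γ ↦ hMC γ i j q)
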